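/- arXiv:1208.4584 — 2 statements merged into one kernel-verified Lean document; each statement's English description precedes it below -/
import Mathlib

section
/- Let g ∈ ℂ[x,y] be a non-constant polynomial, ĥ(t) = Σ_{k=0}^m c_k t^k ∈ ℂ[t] with c_m ≠ 0 and m ≥ 1, and f = ĥ ∘ g ∈ ℂ[x,y]. Let u ∈ ℝ² be such that μ := min_{w ∈ Γ_∞(g)} ⟨u,w⟩ < 0, let γ̃ = {v ∈ Γ_∞(g) : ⟨u,v⟩ = μ} be the supporting face of u in Γ_∞(g), and let γ be the supporting face of u in Γ_∞(f). Then min_{w ∈ Γ_∞(f)} ⟨u,w⟩ = m·μ, γ = m·γ̃ = {m·w : w ∈ γ̃}, and f_γ = c_m · (g_{γ̃})^m. -/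
open scoped Classical

noncomputable section

/-- Dot product on `ℝⁿ`. -/
def dotR {n : ℕ} (u v : Fin n → ℝ) : ℝ := ∑ i, u i * v i

/-- The image in `ℝⁿ` of the support of a polynomial. -/
def realSupp {n : ℕ} (f : MvPolynomial (Fin n) ℂ) : Set (Fin n → ℝ) :=
  (fun v : Fin n →₀ ℕ => fun i => (v i : ℝ)) '' {v | MvPolynomial.coeff v f ≠ 0}

/-- The Newton polyhedron at infinity `Γ_∞(f)`. -/
def NPinf {n : ℕ} (f : MvPolynomial (Fin n) ℂ) : Set (Fin n → ℝ) :=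
  convexHull ℝ ({0} ∪ realSupp f)

/-- The supporting face `γ_u` of `u` in `Γ_∞(f)`. -/
def suppFace {n : ℕ} (f : MvPolynomial (Fin n) ℂ) (u : Fin n → ℝ) : Set (Fin n → ℝ) :=
  {v ∈ NPinf f | ∀ w ∈ NPinf f, dotR u v ≤ dotR u w}

/-- A face of `Γ_∞(f)` is any set of the form `γ_u`. -/
def IsFaceOf {n : ℕ} (f : MvPolynomial (Fin n) ℂ) (γ : Set (Fin n → ℝ)) : Prop :=
  ∃ u : Fin n → ℝ, γ = suppFace f u

/-- Dimension of a subset of `ℝⁿ`: the dimension of its affine span. -/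
def setDim {n : ℕ} (s : Set (Fin n → ℝ)) : ℕ :=
  Module.finrank ℝ (affineSpan ℝ s).direction

/-- A face `γ` of `Γ_∞(f)` with `0 ∈ γ` is atypical if some facet of `Γ_∞(f)`
containing `γ` has all its nonzero inner conormal vectors outside `ℝ_{≥0}ⁿ`. -/
def IsAtypicalFace {n : ℕ} (f : MvPolynomial (Fin n) ℂ) (γ : Set (Fin n → ℝ)) : Prop :=
  IsFaceOf f γ ∧ (0 : Fin n → ℝ) ∈ γ ∧
    ∃ Γf : Set (Fin n → ℝ), IsFaceOf f Γf ∧ setDim Γf = n - 1 ∧ γ ⊆ Γf ∧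
      ∀ u : Fin n → ℝ, u ≠ 0 → suppFace f u = Γf → ¬ (∀ i, 0 ≤ u i)

/-- The cone `σ(γ)` of the dual fan of `Γ_∞(f)` corresponding to the face `γ`. -/
def sigmaCone {n : ℕ} (f : MvPolynomial (Fin n) ℂ) (γ : Set (Fin n → ℝ)) : Set (Fin n → ℝ) :=
  closure {u : Fin n → ℝ | suppFace f u = γ}

/-- The coordinate subspace `ℝ^S` of `ℝⁿ`. -/
def coordSub {n : ℕ} (S : Finset (Fin n)) : Set (Fin n → ℝ) :=
  {v | ∀ i ∉ S, v i = 0}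

/-- The `γ`-part `f_γ` of `f`. -/
def facePart {n : ℕ} (f : MvPolynomial (Fin n) ℂ) (γ : Set (Fin n → ℝ)) :
    MvPolynomial (Fin n) ℂ :=
  ∑ v ∈ f.support,
    if (fun i => (v i : ℝ)) ∈ γ then MvPolynomial.monomial v (MvPolynomial.coeff v f) else 0

/-- `f` is non-degenerate at infinity. -/
def NondegAtInfty {n : ℕ} (f : MvPolynomial (Fin n) ℂ) : Prop :=
  ∀ γ : Set (Fin n → ℝ), IsFaceOf f γ → (0 : Fin n → ℝ) ∉ γ →
    ∀ x : Fin n → ℂ, (∀ i, x i ≠ 0) → MvPolynomial.eval x (facePart f γ) = 0 →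
      ∃ i, MvPolynomial.eval x (MvPolynomial.pderiv i (facePart f γ)) ≠ 0

/-- `Δ_γ`: the convex hull of `{0} ∪ γ`. -/
def DeltaG {n : ℕ} (γ : Set (Fin n → ℝ)) : Set (Fin n → ℝ) :=
  convexHull ℝ ({0} ∪ γ)

/-- The lattice `M_γ = ℤⁿ ∩ L(Δ_γ)`. -/
def Mgamma {n : ℕ} (γ : Set (Fin n → ℝ)) : AddSubgroup (Fin n → ℤ) where
  carrier := {v | (fun i => (v i : ℝ)) ∈ Submodule.span ℝ (DeltaG γ)}
  add_mem' := by
    intro a b ha hb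
    have h : (fun i => (((a + b) : Fin n → ℤ) i : ℝ))
        = (fun i => (a i : ℝ)) + fun i => (b i : ℝ) := by
      funext i; push_cast [Pi.add_apply]; ring
    simp only [Set.mem_setOf_eq, h]
    exact Submodule.add_mem _ ha hb
  zero_mem' := by
    have h : (fun i => (((0 : Fin n → ℤ)) i : ℝ)) = (0 : Fin n → ℝ) := by
      funext i; simp
    simp only [Set.mem_setOf_eq, h]
    exact Submodule.zero_mem _
  neg_mem' := by
    intro a ha
    have h : (fun i => (((-a) : Fin n → ℤ) i : ℝ)) = -(fun i => (a i : ℝ)) := by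
      funext i; push_cast [Pi.neg_apply]; ring
    simp only [Set.mem_setOf_eq, h]
    exact Submodule.neg_mem _ ha

/-! Substituting `g` into `h` multiplies the support function of the Newton polyhedron by
`m = deg h`: in a direction `u` where the minimum `μ` over `Γ_∞(g)` is negative, the part of lowest
weight of `∑ c_k g^k` comes from `k = m` alone, since `m μ < k μ` for `k < m`, and it equals
`c_m (g_γ̃)^m` because taking parts of lowest weight is multiplicative. This part is nonzero, so
`m μ` is attained; where `μ = 0` it is attained at the origin. Compact convex sets with the same
support function coincide, so `Γ_∞(h ∘ g) = m • Γ_∞(g)`, from which the faces can be read off. -/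

section WeightedFiltration

open MvPolynomial

variable {σ R M : Type*} [CommSemiring R] [AddCommMonoid M] {w : σ → M}
  {a b : M} {p q : MvPolynomial σ R}

section Preorder

variable [Preorder M]

/-- The step at `a` of the decreasing filtration of the polynomial ring by weight: the polynomials
all of whose monomials have `w`-weight at least `a`. -/
def weightedFiltration (w : σ → M) (a : M) : Submodule R (MvPolynomial σ R) :=
  restrictSupport R {d | a ≤ Finsupp.weight w d}

theorem mem_weightedFiltration :
    p ∈ weightedFiltration w a ↔ ∀ d, coeff d p ≠ 0 → a ≤ Finsupp.weight w d := by
  simp [weightedFiltration, mem_restrictSupport_iff, Set.subset_def]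

theorem weightedFiltration_anti (hab : a ≤ b) :
    (weightedFiltration w b : Submodule R (MvPolynomial σ R)) ≤ weightedFiltration w a :=
  restrictSupport_mono R fun _ hd => hab.trans hd

theorem one_mem_weightedFiltration : (1 : MvPolynomial σ R) ∈ weightedFiltration w (0 : M) := by
  rw [mem_weightedFiltration]
  intro d hd
  rw [coeff_one, ne_eq, ite_eq_right_iff, not_forall] at hd
  obtain ⟨rfl, -⟩ := hd
  rw [map_zero]

theorem weightedHomogeneousComponent_eq_zero_of_lt (hab : a < b)
    (hp : p ∈ weightedFiltration w b) : weightedHomogeneousComponent w a p = 0 :=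
  weightedHomogeneousComponent_eq_zero' a p fun d hd had =>
    (mem_weightedFiltration.1 hp d (mem_support_iff.1 hd)).not_gt (had ▸ hab)

variable [IsOrderedAddMonoid M]

open scoped Pointwise in
theorem mul_mem_weightedFiltration (hp : p ∈ weightedFiltration w a)
    (hq : q ∈ weightedFiltration w b) : p * q ∈ weightedFiltration w (a + b) := by
  have hsub : {d : σ →₀ ℕ | a ≤ Finsupp.weight w d} + {d | b ≤ Finsupp.weight w d} ⊆
      {d | a + b ≤ Finsupp.weight w d} := by
    rintro _ ⟨d, hd, e, he, rfl⟩
    exact (add_le_add hd he).trans_eq (map_add (Finsupp.weight w) d e).symm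
  refine restrictSupport_mono R hsub ?_
  rw [restrictSupport_add]
  exact Submodule.mul_mem_mul hp hq

theorem pow_mem_weightedFiltration (hp : p ∈ weightedFiltration w a) (k : ℕ) :
    p ^ k ∈ weightedFiltration w (k • a) := by
  induction k with
  | zero => simpa using one_mem_weightedFiltration
  | succ k ih => simpa only [pow_succ, succ_nsmul] using mul_mem_weightedFiltration ih hp

theorem aeval_mem_weightedFiltration (ha : a ≤ 0) (hp : p ∈ weightedFiltration w a)
    (h : Polynomial R) : Polynomial.aeval p h ∈ weightedFiltration w (h.natDegree • a) := by
  rw [Polynomial.aeval_eq_sum_range]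
  refine Submodule.sum_mem _ fun k hk => Submodule.smul_mem _ _ ?_
  exact weightedFiltration_anti
    (nsmul_le_nsmul_left_of_nonpos ha (Finset.mem_range_succ_iff.1 hk))
    (pow_mem_weightedFiltration hp k)

end Preorder

section PartialOrder

variable [PartialOrder M] [IsOrderedCancelAddMonoid M]

theorem weightedHomogeneousComponent_add_mul (hp : p ∈ weightedFiltration w a)
    (hq : q ∈ weightedFiltration w b) :
    weightedHomogeneousComponent w (a + b) (p * q) =
      weightedHomogeneousComponent w a p * weightedHomogeneousComponent w b q := by
  ext d
  simp only [coeff_weightedHomogeneousComponent, coeff_mul, Finset.ite_sum_zero]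
  refine Finset.sum_congr rfl fun x hx => ?_
  by_cases hpx : coeff x.1 p = 0
  · simp [hpx]
  by_cases hqx : coeff x.2 q = 0
  · simp [hqx]
  have hiff : Finsupp.weight w d = a + b ↔
      Finsupp.weight w x.1 = a ∧ Finsupp.weight w x.2 = b := by
    rw [← Finset.HasAntidiagonal.mem_antidiagonal.1 hx, map_add, eq_comm, add_eq_add_iff_eq_and_eq
      (mem_weightedFiltration.1 hp _ hpx) (mem_weightedFiltration.1 hq _ hqx),
      eq_comm, @eq_comm _ b]
  rw [ite_zero_mul_ite_zero]
  exact if_congr hiff rfl rfl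

theorem weightedHomogeneousComponent_nsmul_pow (hp : p ∈ weightedFiltration w a) (k : ℕ) :
    weightedHomogeneousComponent w (k • a) (p ^ k) = weightedHomogeneousComponent w a p ^ k := by
  induction k with
  | zero => simpa using (isWeightedHomogeneous_one R w).weightedHomogeneousComponent_same
  | succ k ih =>
    rw [pow_succ, pow_succ, succ_nsmul,
      weightedHomogeneousComponent_add_mul (pow_mem_weightedFiltration hp k) hp, ih]

theorem weightedHomogeneousComponent_aeval (ha : a < 0) (hp : p ∈ weightedFiltration w a)
    (h : Polynomial R) :
    weightedHomogeneousComponent w (h.natDegree • a) (Polynomial.aeval p h) =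
      C h.leadingCoeff * weightedHomogeneousComponent w a p ^ h.natDegree := by
  have hlower : ∀ k ∈ Finset.range h.natDegree,
      weightedHomogeneousComponent w (h.natDegree • a) (h.coeff k • p ^ k) = 0 := by
    intro k hk
    have hlt : h.natDegree • a < k • a :=
      nsmul_lt_nsmul_left (M := Mᵒᵈ) ha (Finset.mem_range.1 hk)
    rw [map_smul, weightedHomogeneousComponent_eq_zero_of_lt hlt (pow_mem_weightedFiltration hp k),
      smul_zero]
  rw [Polynomial.aeval_eq_sum_range, map_sum, Finset.sum_range_succ, Finset.sum_eq_zero hlower,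
    zero_add, map_smul, weightedHomogeneousComponent_nsmul_pow hp, smul_eq_C_mul,
    Polynomial.leadingCoeff]

end PartialOrder

end WeightedFiltration

section DotR

open scoped Pointwise

variable {n : ℕ} {u : Fin n → ℝ} {K L : Set (Fin n → ℝ)} {μ : ℝ}

theorem isLinearMap_dotR (u : Fin n → ℝ) : IsLinearMap ℝ (dotR u) :=
  ⟨dotProduct_add u, fun c v => dotProduct_smul c u v⟩

theorem weight_eq_dotR (u : Fin n → ℝ) (d : Fin n →₀ ℕ) :
    Finsupp.weight u d = dotR u (fun i => (d i : ℝ)) := by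
  simp [Finsupp.weight_apply, Finsupp.sum_fintype, dotR, mul_comm]

theorem exists_dotR_lt_of_notMem (hK : Convex ℝ K) (hKc : IsClosed K) {x : Fin n → ℝ}
    (hx : x ∉ K) : ∃ u, ∀ y ∈ K, dotR u x < dotR u y := by
  obtain ⟨l, c, hlx, hlK⟩ := geometric_hahn_banach_point_closed hK hKc hx
  obtain ⟨u, hu⟩ := (dotProductEquiv ℝ (Fin n)).surjective l.toLinearMap
  have hl : ∀ y, l y = dotR u y := fun y => (LinearMap.congr_fun hu y).symm
  exact ⟨u, fun y hy => hl x ▸ hl y ▸ hlx.trans (hlK y hy)⟩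

theorem subset_of_forall_isLeast_dotR (hL : Convex ℝ L) (hLc : IsClosed L)
    (h : ∀ u, ∃ a, IsLeast (dotR u '' K) a ∧ IsLeast (dotR u '' L) a) : K ⊆ L := by
  intro x hx
  by_contra hxL
  obtain ⟨u, hu⟩ := exists_dotR_lt_of_notMem hL hLc hxL
  obtain ⟨a, haK, ⟨y, hy, rfl⟩, -⟩ := h u
  exact (hu y hy).not_ge (haK.2 (Set.mem_image_of_mem _ hx))

theorem eq_of_forall_isLeast_dotR (hK : Convex ℝ K) (hKc : IsClosed K) (hL : Convex ℝ L)
    (hLc : IsClosed L) (h : ∀ u, ∃ a, IsLeast (dotR u '' K) a ∧ IsLeast (dotR u '' L) a) :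
    K = L :=
  (subset_of_forall_isLeast_dotR hL hLc h).antisymm
    (subset_of_forall_isLeast_dotR hK hKc fun u => (h u).imp fun _ => And.symm)

theorem isLeast_dotR_smul {c : ℝ} (hc : 0 ≤ c) (hμ : IsLeast (dotR u '' K) μ) :
    IsLeast (dotR u '' (c • K)) (c * μ) := by
  have himage : dotR u '' (c • K) = (c * ·) '' (dotR u '' K) :=
    Set.image_comm fun v => (isLinearMap_dotR u).map_smul c v
  rw [himage]
  exact (monotone_mul_left_of_nonneg hc).map_isLeast hμ

theorem sep_smul_dotR_eq (hμ : μ ∈ dotR u '' K) (c : ℝ) :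
    {v ∈ c • K | dotR u v = c * μ} = c • {v ∈ K | dotR u v = μ} := by
  have hne : {v ∈ K | dotR u v = μ}.Nonempty := hμ
  rcases eq_or_ne c 0 with rfl | hc
  · rw [Set.zero_smul_set (hne.mono (Set.sep_subset _ _)), Set.zero_smul_set hne]
    ext v
    simp +contextual [(isLinearMap_dotR u).map_zero]
  · ext v
    simp only [Set.mem_sep_iff, Set.mem_smul_set]
    constructor
    · rintro ⟨⟨x, hx, rfl⟩, hxμ⟩
      rw [(isLinearMap_dotR u).map_smul, smul_eq_mul] at hxμ
      exact ⟨x, ⟨hx, mul_left_cancel₀ hc hxμ⟩, rfl⟩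
    · rintro ⟨x, ⟨hx, rfl⟩, rfl⟩
      exact ⟨⟨x, hx, rfl⟩, (isLinearMap_dotR u).map_smul c x⟩

end DotR

section NewtonPolyhedron

open MvPolynomial
open scoped Pointwise

variable {n : ℕ} {f g : MvPolynomial (Fin n) ℂ} {u : Fin n → ℝ} {μ : ℝ}

theorem zero_mem_NPinf (f : MvPolynomial (Fin n) ℂ) : (0 : Fin n → ℝ) ∈ NPinf f :=
  subset_convexHull ℝ _ (Or.inl rfl)

theorem natCast_mem_NPinf {d : Fin n →₀ ℕ} (hd : coeff d f ≠ 0) :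
    (fun i => (d i : ℝ)) ∈ NPinf f :=
  subset_convexHull ℝ _ (Or.inr ⟨d, hd, rfl⟩)

theorem NPinf_subset_iff {K : Set (Fin n → ℝ)} (hK : Convex ℝ K) :
    NPinf f ⊆ K ↔ 0 ∈ K ∧ ∀ d : Fin n →₀ ℕ, coeff d f ≠ 0 → (fun i => (d i : ℝ)) ∈ K := by
  rw [NPinf, hK.convexHull_subset_iff, Set.union_subset_iff, Set.singleton_subset_iff, realSupp,
    Set.image_subset_iff]
  rfl

theorem isCompact_NPinf (f : MvPolynomial (Fin n) ℂ) : IsCompact (NPinf f) := by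
  have hfin : {d | coeff d f ≠ 0}.Finite :=
    f.support.finite_toSet.subset fun d hd => mem_support_iff.2 hd
  exact ((Set.finite_singleton _).union (hfin.image _)).isCompact_convexHull ℝ

theorem exists_isLeast_dotR_NPinf (u : Fin n → ℝ) (f : MvPolynomial (Fin n) ℂ) :
    ∃ μ, IsLeast (dotR u '' NPinf f) μ := by
  have hcont : Continuous (dotR u) := by unfold dotR; fun_prop
  exact ((isCompact_NPinf f).image hcont).exists_isLeast ⟨_, 0, zero_mem_NPinf f, rfl⟩

theorem mem_lowerBounds_dotR_NPinf_iff :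
    μ ∈ lowerBounds (dotR u '' NPinf f) ↔ μ ≤ 0 ∧ f ∈ weightedFiltration u μ := by
  have hsub : μ ∈ lowerBounds (dotR u '' NPinf f) ↔ NPinf f ⊆ {v | μ ≤ dotR u v} := by
    simp [mem_lowerBounds, Set.subset_def]
  rw [hsub, NPinf_subset_iff (convex_halfSpace_ge (isLinearMap_dotR u) μ), mem_weightedFiltration]
  simp [weight_eq_dotR, (isLinearMap_dotR u).map_zero]

theorem weightedHomogeneousComponent_ne_zero_of_isLeast (hμ : IsLeast (dotR u '' NPinf f) μ)
    (hneg : μ < 0) : weightedHomogeneousComponent u μ f ≠ 0 := by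
  intro hzero
  have hsub : NPinf f ⊆ {v | μ < dotR u v} := by
    refine (NPinf_subset_iff (convex_halfSpace_gt (isLinearMap_dotR u) μ)).2
      ⟨by simpa [(isLinearMap_dotR u).map_zero] using hneg, fun d hd => ?_⟩
    refine lt_of_le_of_ne (hμ.2 ⟨_, natCast_mem_NPinf hd, rfl⟩) fun heq => hd ?_
    simpa [coeff_weightedHomogeneousComponent, weight_eq_dotR, ← heq] using congrArg (coeff d) hzero
  obtain ⟨v, hv, hvμ⟩ := hμ.1
  exact (hsub hv).ne' hvμ

theorem natDegree_mul_mem_dotR_NPinf_aeval (hμ : IsLeast (dotR u '' NPinf g) μ)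
    (h : Polynomial ℂ) :
    (h.natDegree : ℝ) * μ ∈ dotR u '' NPinf (Polynomial.aeval g h) := by
  obtain ⟨hμ0, hg⟩ := mem_lowerBounds_dotR_NPinf_iff.1 hμ.2
  rcases eq_or_ne ((h.natDegree : ℝ) * μ) 0 with hzero | hne
  · exact ⟨0, zero_mem_NPinf _, by rw [(isLinearMap_dotR u).map_zero, hzero]⟩
  have hneg : μ < 0 := hμ0.lt_of_ne (right_ne_zero_of_mul hne)
  have hlead : h.leadingCoeff ≠ 0 := by
    rintro h0
    simp [Polynomial.leadingCoeff_eq_zero.1 h0] at hne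
  have hcomp : weightedHomogeneousComponent u (h.natDegree * μ) (Polynomial.aeval g h) ≠ 0 := by
    rw [← nsmul_eq_mul, weightedHomogeneousComponent_aeval hneg hg]
    exact mul_ne_zero (C_ne_zero.2 hlead)
      (pow_ne_zero _ (weightedHomogeneousComponent_ne_zero_of_isLeast hμ hneg))
  obtain ⟨d, hd⟩ := ne_zero_iff.1 hcomp
  rw [coeff_weightedHomogeneousComponent, ne_eq, ite_eq_right_iff, Classical.not_imp] at hd
  exact ⟨_, natCast_mem_NPinf hd.2, weight_eq_dotR u d ▸ hd.1⟩

theorem isLeast_dotR_NPinf_aeval (hμ : IsLeast (dotR u '' NPinf g) μ) (h : Polynomial ℂ) :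
    IsLeast (dotR u '' NPinf (Polynomial.aeval g h)) (h.natDegree * μ) := by
  obtain ⟨hμ0, hg⟩ := mem_lowerBounds_dotR_NPinf_iff.1 hμ.2
  refine ⟨natDegree_mul_mem_dotR_NPinf_aeval hμ h, mem_lowerBounds_dotR_NPinf_iff.2
    ⟨mul_nonpos_of_nonneg_of_nonpos (Nat.cast_nonneg _) hμ0, ?_⟩⟩
  simpa only [nsmul_eq_mul] using aeval_mem_weightedFiltration hμ0 hg h

theorem NPinf_aeval (g : MvPolynomial (Fin n) ℂ) (h : Polynomial ℂ) :
    NPinf (Polynomial.aeval g h) = (h.natDegree : ℝ) • NPinf g := by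
  refine eq_of_forall_isLeast_dotR (convex_convexHull ℝ _) (isCompact_NPinf _).isClosed
    ((convex_convexHull ℝ _).smul _) ((isCompact_NPinf g).smul _).isClosed fun u => ?_
  obtain ⟨μ, hμ⟩ := exists_isLeast_dotR_NPinf u g
  exact ⟨_, isLeast_dotR_NPinf_aeval hμ h, isLeast_dotR_smul (Nat.cast_nonneg _) hμ⟩

theorem suppFace_eq_of_isLeast (hμ : IsLeast (dotR u '' NPinf f) μ) :
    suppFace f u = {v ∈ NPinf f | dotR u v = μ} := by
  refine Set.sep_ext_iff.2 fun v hv => ⟨fun hmin => ?_, ?_⟩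
  · have hv_least : IsLeast (dotR u '' NPinf f) (dotR u v) :=
      ⟨⟨v, hv, rfl⟩, Set.forall_mem_image.2 hmin⟩
    exact hv_least.unique hμ
  · rintro rfl
    exact Set.forall_mem_image.1 hμ.2

theorem facePart_suppFace_of_isLeast (hμ : IsLeast (dotR u '' NPinf f) μ) :
    facePart f (suppFace f u) = weightedHomogeneousComponent u μ f := by
  rw [weightedHomogeneousComponent_apply, Finset.sum_filter, facePart]
  refine Finset.sum_congr rfl fun d hd => if_congr ?_ rfl rfl
  rw [suppFace_eq_of_isLeast hμ, Set.mem_sep_iff, weight_eq_dotR]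
  exact and_iff_right (natCast_mem_NPinf (mem_support_iff.1 hd))

theorem suppFace_aeval (hμ : IsLeast (dotR u '' NPinf g) μ) (h : Polynomial ℂ) :
    suppFace (Polynomial.aeval g h) u = (h.natDegree : ℝ) • suppFace g u := by
  rw [suppFace_eq_of_isLeast (isLeast_dotR_NPinf_aeval hμ h), suppFace_eq_of_isLeast hμ,
    NPinf_aeval, sep_smul_dotR_eq hμ.1]

theorem facePart_suppFace_aeval (hμ : IsLeast (dotR u '' NPinf g) μ) (hneg : μ < 0)
    (h : Polynomial ℂ) :
    facePart (Polynomial.aeval g h) (suppFace (Polynomial.aeval g h) u) =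
      C h.leadingCoeff * facePart g (suppFace g u) ^ h.natDegree := by
  rw [facePart_suppFace_of_isLeast (isLeast_dotR_NPinf_aeval hμ h),
    facePart_suppFace_of_isLeast hμ, ← nsmul_eq_mul]
  exact weightedHomogeneousComponent_aeval hneg (mem_lowerBounds_dotR_NPinf_iff.1 hμ.2).2 h

end NewtonPolyhedron

open scoped Pointwise in
theorem suppFace_facePart_comp_general {n : ℕ} (g : MvPolynomial (Fin n) ℂ) (h : Polynomial ℂ)
    (u : Fin n → ℝ) (μ : ℝ) (hμ : IsLeast (dotR u '' NPinf g) μ) (hneg : μ < 0) :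
    IsLeast (dotR u '' NPinf (Polynomial.aeval g h)) (h.natDegree * μ) ∧
      suppFace (Polynomial.aeval g h) u = (h.natDegree : ℝ) • suppFace g u ∧
      facePart (Polynomial.aeval g h) (suppFace (Polynomial.aeval g h) u) =
        MvPolynomial.C h.leadingCoeff * facePart g (suppFace g u) ^ h.natDegree :=
  ⟨isLeast_dotR_NPinf_aeval hμ h, suppFace_aeval hμ h, facePart_suppFace_aeval hμ hneg h⟩

open scoped Pointwise in
/-- Let `g ∈ ℂ[x,y]` be non-constant, `ĥ(t) = Σ_{k=0}^m c_k t^k` with `c_m ≠ 0`, `m ≥ 1`,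
and `f = ĥ ∘ g`. If `u ∈ ℝ²` satisfies `μ := min_{w ∈ Γ_∞(g)} ⟨u,w⟩ < 0`, then
`min_{w ∈ Γ_∞(f)} ⟨u,w⟩ = m·μ`, the supporting face of `u` in `Γ_∞(f)` is `m` times the one
in `Γ_∞(g)`, and `f_γ = c_m · (g_γ̃)^m`. -/
theorem suppFace_facePart_comp (g : MvPolynomial (Fin 2) ℂ) (hg : 0 < g.totalDegree)
    (hhat : Polynomial ℂ) (m : ℕ) (hm : 1 ≤ m) (hdeg : hhat.natDegree = m)
    (hc : hhat.coeff m ≠ 0)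
    (f : MvPolynomial (Fin 2) ℂ) (hf : f = Polynomial.aeval g hhat)
    (u : Fin 2 → ℝ) (μ : ℝ)
    (hμmem : ∃ w ∈ NPinf g, dotR u w = μ)
    (hμle : ∀ w ∈ NPinf g, μ ≤ dotR u w)
    (hμneg : μ < 0) :
    ((∃ w ∈ NPinf f, dotR u w = (m : ℝ) * μ) ∧ (∀ w ∈ NPinf f, (m : ℝ) * μ ≤ dotR u w)) ∧
    suppFace f u = (m : ℝ) • suppFace g u ∧
    facePart f (suppFace f u) =
      MvPolynomial.C (hhat.coeff m) * (facePart g (suppFace g u)) ^ m := by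
  subst hdeg hf
  exact (suppFace_facePart_comp_general g hhat u μ ⟨hμmem, Set.forall_mem_image.2 hμle⟩
    hμneg).imp_left (And.imp_right Set.forall_mem_image.1)
end
end

section
/- Let γ be a face at infinity of Γ_∞(f) (i.e. a face with 0 ∉ γ). Then there exists a unique surjective group homomorphism u_γ : M_γ → ℤ such that the subset of Δ_γ on which the ℝ-linear extension of u_γ to L(Δ_γ) attains its maximum over Δ_γ is exactly γ; moreover the maximum d_γ = max_{w ∈ Δ_γ} u_γ(w) is a (strictly) positive integer. -/
open scoped Classical

noncomputable section

/-!
A face at infinity `γ` is the convex hull of a set `S` of lattice points on which some real linear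
form `φ` is a nonzero constant `c`. The image `φ(M_γ)` is a finitely generated torsion-free group,
hence free, so some homomorphism `φ(M_γ) → ℤ` does not vanish at `c`. Composing it with `φ`, then
dividing by the generator of the image and adjusting the sign, gives a surjection `u : M_γ → ℤ`
with a constant value `d > 0` on `S`. A linear extension of `u` equals `d` on `γ` and vanishes at
`0`, so it is maximal over `Δ_γ` exactly on `γ`. If `u'` is another such surjection, with value
`d'`, then `d u' = d' u` because `γ` spans `L(Δ_γ)`; as `u` and `u'` both take the value `1`, the
positive integers `d` and `d'` divide each other.
-/

section PrincipalIdealDomain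

variable {R M A : Type*} [CommRing R] [IsDomain R] [IsPrincipalIdealRing R]
  [AddCommGroup M] [Module R M] [AddCommGroup A] [Module R A]

theorem exists_surjective_smul_eq {w : M →ₗ[R] R} (hw : w ≠ 0) :
    ∃ g : R, g ≠ 0 ∧ ∃ u : M →ₗ[R] R, Function.Surjective u ∧ w = g • u := by
  obtain ⟨g, hg⟩ := IsPrincipalIdealRing.principal (LinearMap.range w)
  have hg0 : g ≠ 0 := by
    rintro rfl
    exact hw (LinearMap.range_eq_bot.mp (by simpa using hg))
  let e : LinearMap.range w ≃ₗ[R] R :=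
    LinearEquiv.ofEq _ _ hg ≪≫ₗ (LinearEquiv.toSpanNonzeroSingleton R R g hg0).symm
  refine ⟨g, hg0, e ∘ₗ w.rangeRestrict, e.surjective.comp w.surjective_rangeRestrict, ?_⟩
  ext m
  calc w m = e.symm (e (w.rangeRestrict m)) :=
        (congrArg Subtype.val (e.symm_apply_apply (w.rangeRestrict m))).symm
    _ = g * e (w.rangeRestrict m) := mul_comm _ _

theorem exists_surjective_apply_ne_zero_ker_le [Module.Finite R M] [Module.IsTorsionFree R A]
    (φ : M →ₗ[R] A) {m : M} (hm : φ m ≠ 0) :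
    ∃ u : M →ₗ[R] R, Function.Surjective u ∧ u m ≠ 0 ∧ LinearMap.ker φ ≤ LinearMap.ker u := by
  obtain ⟨r, hr⟩ := Module.Projective.exists_dual_ne_zero R (x := φ.rangeRestrict m)
    fun h => hm (congrArg Subtype.val h)
  have hw : r ∘ₗ φ.rangeRestrict ≠ 0 := fun h => hr (LinearMap.congr_fun h m)
  obtain ⟨g, hg, u, hu, hgu⟩ := exists_surjective_smul_eq hw
  have hmul (x : M) : r (φ.rangeRestrict x) = g * u x := LinearMap.congr_fun hgu x
  refine ⟨u, hu, fun h => hr (by rw [hmul, h, mul_zero]), fun x hx => ?_⟩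
  have hx' : φ.rangeRestrict x = 0 := Subtype.ext hx
  simpa [hx', hg] using hmul x

end PrincipalIdealDomain

theorem exists_surjective_int_apply_pos_ker_le {M A : Type*} [AddCommGroup M]
    [Module.Finite ℤ M] [AddCommGroup A] [IsAddTorsionFree A] (φ : M →+ A) {m : M}
    (hm : φ m ≠ 0) :
    ∃ u : M →+ ℤ, Function.Surjective u ∧ 0 < u m ∧ φ.ker ≤ u.ker := by
  obtain ⟨u, hu, hum, hker⟩ := exists_surjective_apply_ne_zero_ker_le φ.toIntLinearMap hm
  rcases hum.lt_or_gt with hneg | hpos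
  · exact ⟨(-u).toAddMonoidHom, neg_surjective.comp hu, neg_pos.mpr hneg,
      fun x hx => neg_eq_zero.mpr (hker hx)⟩
  · exact ⟨u.toAddMonoidHom, hu, hpos, hker⟩

theorem eq_of_surjective_of_mul_eq_mul {α : Type*} {u u' : α → ℤ} (hu : Function.Surjective u)
    (hu' : Function.Surjective u') {d d' : ℤ} (hd : 0 < d) (hd' : 0 ≤ d')
    (h : ∀ a, d * u' a = d' * u a) : u' = u := by
  obtain ⟨a, ha⟩ := hu 1
  obtain ⟨b, hb⟩ := hu' 1
  have hdd' : d = d' := Int.dvd_antisymm hd.le hd'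
    ⟨u' a, by simpa [ha] using (h a).symm⟩ ⟨u b, by simpa [hb] using h b⟩
  exact funext fun x => mul_left_cancel₀ hd.ne' (by rw [h x, hdd'])

theorem exists_linearMap_extending {ι K : Type*} [Finite ι] [Field K] [CharZero K]
    {H : AddSubgroup (ι → ℤ)} (u : H →+ K) :
    ∃ ℓ : (ι → K) →ₗ[K] K, ∀ v : H, ℓ (fun i => ((v : ι → ℤ) i : K)) = u v := by
  cases nonempty_fintype ι
  obtain ⟨h, hh⟩ := (Module.Baer.of_divisible K).extension_property_addMonoidHom
    H.subtype H.subtype_injective u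
  refine ⟨Fintype.linearCombination K fun i => h (Pi.single i 1), fun v => ?_⟩
  calc Fintype.linearCombination K (fun i => h (Pi.single i 1)) (fun i => ((v : ι → ℤ) i : K))
      = ∑ i, (v : ι → ℤ) i • h (Pi.single i 1) := by
        simp [Fintype.linearCombination_apply]
    _ = h (∑ i, (v : ι → ℤ) i • Pi.single i 1) := by simp only [map_sum, map_zsmul]
    _ = h v := by rw [← pi_eq_sum_univ']
    _ = u v := DFunLike.congr_fun hh v

theorem span_convexHull {𝕜 E : Type*} [Semiring 𝕜] [PartialOrder 𝕜]
    [AddCommMonoid E] [Module 𝕜 E] (s : Set E) :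
    Submodule.span 𝕜 (convexHull 𝕜 s) = Submodule.span 𝕜 s :=
  le_antisymm
    (Submodule.span_le.mpr (convexHull_min Submodule.subset_span (Submodule.convex _)))
    (Submodule.span_mono (subset_convexHull 𝕜 s))

section Convex

variable {𝕜 E : Type*} [Ring 𝕜] [LinearOrder 𝕜] [IsStrictOrderedRing 𝕜] [AddCommMonoid E]
  [Module 𝕜 E]

theorem eq_convexHull_inter_of_isExtreme {s F : Set E}
    (hF : IsExtreme 𝕜 (convexHull 𝕜 s) F) (hconv : Convex 𝕜 F) :
    F = convexHull 𝕜 (s ∩ F) := by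
  refine Set.Subset.antisymm ?_ (convexHull_min Set.inter_subset_right hconv)
  set C : Set E := convexHull 𝕜 s \ F ∪ convexHull 𝕜 (s ∩ F)
  have hC_sub : C ⊆ convexHull 𝕜 s :=
    Set.union_subset Set.sdiff_subset (convexHull_mono Set.inter_subset_left)
  have hC_conv : Convex 𝕜 C := by
    rw [convex_iff_openSegment_subset]
    intro x hx y hy z hz
    by_cases hzF : z ∈ F
    · have hxF := hF.left_mem_of_mem_openSegment (hC_sub hx) (hC_sub hy) hzF hz
      have hyF := hF.right_mem_of_mem_openSegment (hC_sub hx) (hC_sub hy) hzF hz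
      exact Or.inr ((convex_convexHull 𝕜 _).openSegment_subset
        (hx.resolve_left fun h => h.2 hxF) (hy.resolve_left fun h => h.2 hyF) hz)
    · exact Or.inl ⟨(convex_convexHull 𝕜 s).openSegment_subset (hC_sub hx) (hC_sub hy) hz, hzF⟩
  have hsC : s ⊆ C := fun x hx => by
    by_cases hxF : x ∈ F
    · exact Or.inr (subset_convexHull 𝕜 _ ⟨hx, hxF⟩)
    · exact Or.inl ⟨subset_convexHull 𝕜 s hx, hxF⟩
  exact fun x hx => (convexHull_min hsC hC_conv (hF.subset hx)).resolve_left fun h => h.2 hx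

theorem apply_eq_of_mem_convexHull {s : Set E} {ℓ : E →ₗ[𝕜] 𝕜} {c : 𝕜}
    (h : ∀ x ∈ s, ℓ x = c) : ∀ x ∈ convexHull 𝕜 s, ℓ x = c :=
  convexHull_min h (convex_hyperplane ℓ.isLinear c)

theorem setOf_isMax_convexHull_union_zero [TopologicalSpace 𝕜] [TopologicalSpace E] {γ : Set E}
    (hγ : Convex 𝕜 γ) (hne : γ.Nonempty) (ℓ : StrongDual 𝕜 E) {d : 𝕜} (hd : 0 < d)
    (hℓ : ∀ x ∈ γ, ℓ x = d) :
    {x ∈ convexHull 𝕜 ({0} ∪ γ) | ∀ y ∈ convexHull 𝕜 ({0} ∪ γ), ℓ y ≤ ℓ x} = γ := by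
  set Δ : Set E := convexHull 𝕜 ({0} ∪ γ)
  have hle : ∀ y ∈ Δ, ℓ y ≤ d := by
    refine convexHull_min (t := {y | ℓ y ≤ d}) ?_ (convex_halfSpace_le ℓ.isLinear d)
    rintro y (rfl | hy)
    · simpa using hd.le
    · exact (hℓ y hy).le
  have hγΔ : γ ⊆ Δ := Set.subset_union_right.trans (subset_convexHull 𝕜 _)
  have hγF : ({0} ∪ γ) ∩ ℓ.toExposed Δ = γ := by
    refine Set.Subset.antisymm ?_ fun x hx =>
      ⟨Or.inr hx, hγΔ hx, fun y hy => (hle y hy).trans_eq (hℓ x hx).symm⟩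
    rintro x ⟨rfl | hx, hxF⟩
    · obtain ⟨a, ha⟩ := hne
      have had : d ≤ 0 := by simpa [hℓ a ha] using hxF.2 a (hγΔ ha)
      exact absurd had hd.not_ge
    · exact hx
  have hF : IsExposed 𝕜 Δ (ℓ.toExposed Δ) := ContinuousLinearMap.toExposed.isExposed
  calc ℓ.toExposed Δ = convexHull 𝕜 (({0} ∪ γ) ∩ ℓ.toExposed Δ) :=
        eq_convexHull_inter_of_isExtreme hF.isExtreme (hF.convex (convex_convexHull 𝕜 _))
    _ = γ := by rw [hγF, hγ.convexHull_eq]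

end Convex

section LatticeConormal

variable {n : ℕ}

section Faces

variable (f : MvPolynomial (Fin n) ℂ) (u : Fin n → ℝ)

theorem finite_realSupp : (realSupp f).Finite :=
  (f.support.finite_toSet.subset fun _ hv => MvPolynomial.mem_support_iff.mpr hv).image _

theorem singleton_zero_union_realSupp_subset_range :
    {0} ∪ realSupp f ⊆ Set.range fun (v : Fin n → ℤ) i => (v i : ℝ) := by
  rintro x (rfl | ⟨v, -, rfl⟩)
  · exact ⟨0, funext fun _ => Int.cast_zero⟩
  · exact ⟨fun i => v i, funext fun i => Int.cast_natCast (v i)⟩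

theorem suppFace_nonempty : (suppFace f u).Nonempty := by
  have hcompact : IsCompact (NPinf f) :=
    ((Set.finite_singleton 0).union (finite_realSupp f)).isCompact_convexHull ℝ
  have hne : (NPinf f).Nonempty := ⟨0, subset_convexHull ℝ _ (Or.inl rfl)⟩
  obtain ⟨a, ha, hmin⟩ := hcompact.exists_isMinOn hne
    (dotProductBilin ℝ ℝ u).continuous_of_finiteDimensional.continuousOn
  exact ⟨a, ha, hmin⟩

theorem isExposed_suppFace : IsExposed ℝ (NPinf f) (suppFace f u) := fun _ =>
  ⟨(-dotProductBilin ℝ ℝ u).toContinuousLinearMap,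
    Set.ext fun _ => and_congr_right fun _ => forall₂_congr fun _ _ => neg_le_neg_iff.symm⟩

theorem suppFace_eq_convexHull :
    suppFace f u = convexHull ℝ (({0} ∪ realSupp f) ∩ suppFace f u) :=
  eq_convexHull_inter_of_isExtreme (isExposed_suppFace f u).isExtreme
    ((isExposed_suppFace f u).convex (convex_convexHull ℝ _))

variable {f u}

theorem dotR_eq_of_mem_suppFace {v w : Fin n → ℝ} (hv : v ∈ suppFace f u)
    (hw : w ∈ suppFace f u) : dotR u v = dotR u w :=
  le_antisymm (hv.2 w hw.1) (hw.2 v hv.1)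

theorem dotR_ne_zero_of_mem_suppFace (h0 : 0 ∉ suppFace f u) {v : Fin n → ℝ}
    (hv : v ∈ suppFace f u) : dotR u v ≠ 0 := by
  intro h
  refine h0 ⟨subset_convexHull ℝ _ (Or.inl rfl), fun w hw => ?_⟩
  calc dotR u 0 = dotR u v := (dotProduct_zero u).trans h.symm
    _ ≤ dotR u w := hv.2 w hw

end Faces

theorem IsFaceOf.exists_eq_convexHull {f : MvPolynomial (Fin n) ℂ} {γ : Set (Fin n → ℝ)}
    (hγ : IsFaceOf f γ) (h0 : (0 : Fin n → ℝ) ∉ γ) :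
    ∃ S : Set (Fin n → ℝ), γ = convexHull ℝ S ∧ S.Nonempty ∧
      S ⊆ (Set.range fun (v : Fin n → ℤ) i => (v i : ℝ)) ∧
      ∃ φ : (Fin n → ℝ) →ₗ[ℝ] ℝ, ∃ c ≠ 0, ∀ x ∈ S, φ x = c := by
  obtain ⟨u, rfl⟩ := hγ
  obtain ⟨a, ha⟩ := suppFace_nonempty f u
  have hhull := suppFace_eq_convexHull f u
  refine ⟨_, hhull, convexHull_nonempty_iff.mp ⟨a, hhull.subset ha⟩,
    Set.inter_subset_left.trans (singleton_zero_union_realSupp_subset_range f),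
    dotProductBilin ℝ ℝ u, dotR u a, dotR_ne_zero_of_mem_suppFace h0 ha,
    fun x hx => dotR_eq_of_mem_suppFace hx.2 ha⟩

theorem span_DeltaG (γ : Set (Fin n → ℝ)) :
    Submodule.span ℝ (DeltaG γ) = Submodule.span ℝ γ := by
  rw [DeltaG, span_convexHull, Set.singleton_union, Submodule.span_insert_zero]

theorem mem_Mgamma_iff {γ : Set (Fin n → ℝ)} {v : Fin n → ℤ} :
    v ∈ Mgamma γ ↔ (fun i => (v i : ℝ)) ∈ Submodule.span ℝ γ := by
  rw [← span_DeltaG]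
  rfl

theorem exists_surjective_const_on_level {γ : Set (Fin n → ℝ)} (φ : (Fin n → ℝ) →ₗ[ℝ] ℝ)
    {v₀ : Mgamma γ} (hv₀ : φ (fun i => ((v₀ : Fin n → ℤ) i : ℝ)) ≠ 0) :
    ∃ u : Mgamma γ →+ ℤ, Function.Surjective u ∧ 0 < u v₀ ∧ ∀ v : Mgamma γ,
      φ (fun i => ((v : Fin n → ℤ) i : ℝ)) = φ (fun i => ((v₀ : Fin n → ℤ) i : ℝ)) →
        u v = u v₀ := by
  have : Module.Finite ℤ (Mgamma γ) :=
    inferInstanceAs (Module.Finite ℤ (AddSubgroup.toIntSubmodule (Mgamma γ)))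
  let Φ : Mgamma γ →+ ℝ :=
    φ.toAddMonoidHom.comp (((Int.castAddHom ℝ).compLeft (Fin n)).comp (Mgamma γ).subtype)
  obtain ⟨u, hu, hpos, hker⟩ := exists_surjective_int_apply_pos_ker_le Φ (m := v₀) hv₀
  refine ⟨u, hu, hpos, fun v hv => ?_⟩
  have hsub : v - v₀ ∈ Φ.ker := by
    rw [AddMonoidHom.mem_ker, map_sub, sub_eq_zero]
    exact hv
  rw [← sub_eq_zero, ← map_sub]
  exact hker hsub

theorem eq_of_extensions_const {γ : Set (Fin n → ℝ)} {u u' : Mgamma γ →+ ℤ}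
    (hu : Function.Surjective u) (hu' : Function.Surjective u')
    {ℓ ℓ' : (Fin n → ℝ) →ₗ[ℝ] ℝ}
    (hℓ : ∀ v : Mgamma γ, ℓ (fun i => ((v : Fin n → ℤ) i : ℝ)) = u v)
    (hℓ' : ∀ v : Mgamma γ, ℓ' (fun i => ((v : Fin n → ℤ) i : ℝ)) = u' v)
    {d d' : ℤ} (hd : 0 < d) (hd' : 0 ≤ d')
    (hℓd : ∀ x ∈ γ, ℓ x = d) (hℓd' : ∀ x ∈ γ, ℓ' x = d') : u' = u := by
  have hspan : Set.EqOn ((d : ℝ) • ℓ') ((d' : ℝ) • ℓ : (Fin n → ℝ) →ₗ[ℝ] ℝ)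
      (Submodule.span ℝ γ) :=
    LinearMap.eqOn_span' fun x hx => by simp [hℓd x hx, hℓd' x hx, mul_comm]
  refine DFunLike.coe_injective (eq_of_surjective_of_mul_eq_mul hu hu' hd hd' fun v => ?_)
  have hv : (d : ℝ) * u' v = d' * u v := by
    rw [← hℓ v, ← hℓ' v]
    exact hspan (mem_Mgamma_iff.mp v.2)
  exact_mod_cast hv

theorem exists_unique_lattice_conormal_general {S : Set (Fin n → ℝ)} (hne : S.Nonempty)
    (hlat : S ⊆ Set.range fun (v : Fin n → ℤ) i => (v i : ℝ))
    (φ : (Fin n → ℝ) →ₗ[ℝ] ℝ) {c : ℝ} (hc : c ≠ 0) (hφ : ∀ x ∈ S, φ x = c) :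
    ∃! u : Mgamma (convexHull ℝ S) →+ ℤ, Function.Surjective u ∧
      ∀ ℓ : (Fin n → ℝ) →ₗ[ℝ] ℝ,
        (∀ v : Mgamma (convexHull ℝ S), ℓ (fun i => ((v : Fin n → ℤ) i : ℝ)) = u v) →
        {x ∈ DeltaG (convexHull ℝ S) | ∀ y ∈ DeltaG (convexHull ℝ S), ℓ y ≤ ℓ x} =
          convexHull ℝ S ∧
        ∃ d : ℤ, 0 < d ∧ ∀ x ∈ convexHull ℝ S, ℓ x = d := by
  set γ : Set (Fin n → ℝ) := convexHull ℝ S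
  have hmem {v : Fin n → ℤ} (hv : (fun i => (v i : ℝ)) ∈ S) : v ∈ Mgamma γ :=
    mem_Mgamma_iff.mpr (Submodule.subset_span (subset_convexHull ℝ S hv))
  obtain ⟨x₀, hx₀⟩ := hne
  obtain ⟨v₀, rfl⟩ := hlat hx₀
  obtain ⟨u, hu, hd, hlevel⟩ :=
    exists_surjective_const_on_level φ (v₀ := ⟨v₀, hmem hx₀⟩) (by rwa [hφ _ hx₀])
  set d : ℤ := u ⟨v₀, hmem hx₀⟩
  have hval (ℓ : (Fin n → ℝ) →ₗ[ℝ] ℝ)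
      (hℓ : ∀ v : Mgamma γ, ℓ (fun i => ((v : Fin n → ℤ) i : ℝ)) = u v) :
      ∀ x ∈ γ, ℓ x = d := by
    refine apply_eq_of_mem_convexHull fun x hx => ?_
    obtain ⟨v, rfl⟩ := hlat hx
    rw [hℓ ⟨v, hmem hx⟩, hlevel ⟨v, hmem hx⟩ ((hφ _ hx).trans (hφ _ hx₀).symm)]
  refine ⟨u, ⟨hu, fun ℓ hℓ => ⟨?_, d, hd, hval ℓ hℓ⟩⟩, ?_⟩
  · exact setOf_isMax_convexHull_union_zero (convex_convexHull ℝ S)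
      ⟨_, subset_convexHull ℝ S hx₀⟩ ℓ.toContinuousLinearMap (Int.cast_pos.mpr hd) (hval ℓ hℓ)
  · rintro u' ⟨hu', hmax⟩
    obtain ⟨ℓ, hℓ⟩ := exists_linearMap_extending ((Int.castAddHom ℝ).comp u)
    obtain ⟨ℓ', hℓ'⟩ := exists_linearMap_extending ((Int.castAddHom ℝ).comp u')
    obtain ⟨-, d', hd', hval'⟩ := hmax ℓ' hℓ'
    exact eq_of_extensions_const hu hu' hℓ hℓ' hd hd'.le (hval ℓ hℓ) hval'

end LatticeConormal

/-- For a face at infinity `γ` of `Γ_∞(f)` there is a unique surjective group homomorphism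
`u_γ : M_γ → ℤ` whose `ℝ`-linear extension attains its maximum over `Δ_γ` exactly on `γ`;
moreover this maximum `d_γ` is a strictly positive integer. -/
theorem exists_unique_lattice_conormal {n : ℕ} (f : MvPolynomial (Fin n) ℂ)
    (γ : Set (Fin n → ℝ)) (hγ : IsFaceOf f γ) (h0 : (0 : Fin n → ℝ) ∉ γ) :
    ∃! u : Mgamma γ →+ ℤ, Function.Surjective u ∧
      ∀ ℓ : (Fin n → ℝ) →ₗ[ℝ] ℝ,
        (∀ v : Mgamma γ, ℓ (fun i => ((v : Fin n → ℤ) i : ℝ)) = u v) →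
        {x ∈ DeltaG γ | ∀ y ∈ DeltaG γ, ℓ y ≤ ℓ x} = γ ∧
        ∃ d : ℤ, 0 < d ∧ ∀ x ∈ γ, ℓ x = d := by
  obtain ⟨S, rfl, hne, hlat, φ, c, hc, hφ⟩ := hγ.exists_eq_convexHull h0
  exact exists_unique_lattice_conormal_general hne hlat φ hc hφ
end
end
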